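/- arXiv:2104.14485 — 5 statements merged into one kernel-verified Lean document; each statement's English description precedes it below -/
import Mathlib

section
/- Let (A, ≺, ≻) be a pre-alternative algebra over a field K of characteristic ≠ 2,3. Define x∘y := x≺y + x≻y. Then (A, ∘) is an alternative algebra, i.e. its associator (x,y,z) = (x∘y)∘z − x∘(y∘z) satisfies (x,y,z) = −(y,x,z) and (x,y,z) = −(x,z,y) for all x,y,z ∈ A. -/
namespace AltExtend

variable {K : Type*} [Field K]
variable {A : Type*} [AddCommGroup A] [Module K A]

/-- The associator of a bilinear multiplication. -/
def assoc (m : A →ₗ[K] A →ₗ[K] A) (x y z : A) : A :=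
  m (m x y) z - m x (m y z)

/-- `m` is an alternative algebra multiplication: the associator is alternating in the
first two and in the last two arguments. -/
def IsAltMul (m : A →ₗ[K] A →ₗ[K] A) : Prop :=
  (∀ x y z : A, assoc m x y z = - assoc m y x z) ∧
  (∀ x y z : A, assoc m x y z = - assoc m x z y)

/-- `(A, pc, sc)` is a pre-alternative algebra, where `pc x y = x ≺ y`, `sc x y = x ≻ y`
and `x ∘ y = x ≻ y + x ≺ y`. -/
def IsPreAltMul (pc sc : A →ₗ[K] A →ₗ[K] A) : Prop :=
  (∀ x y z : A,
    sc (sc x y + pc x y) z - sc x (sc y z) + sc (sc y x + pc y x) z - sc y (sc x z) = 0) ∧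
  (∀ x y z : A,
    pc (pc x y) z - pc x (sc y z + pc y z) + pc (pc x z) y - pc x (sc z y + pc z y) = 0) ∧
  (∀ x y z : A,
    pc (sc x y) z - sc x (pc y z) + pc (pc y x) z - pc y (sc x z + pc x z) = 0) ∧
  (∀ x y z : A,
    pc (sc x y) z - sc x (pc y z) + sc (sc x z + pc x z) y - sc x (sc z y) = 0)

/-!
The associator of `x ∘ y = x ≺ y + x ≻ y` splits into three partial associators, according to
which of the three arguments the operations point at: `≺` points to its left argument, `≻` to its
right one. The axioms of a pre-alternative algebra say that a transposition of adjacent arguments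
permutes these three parts up to sign: exchanging `x` and `y` fixes the part pointing at `z` and
swaps the other two, and similarly for `y` and `z`. So the sum of the three parts is alternating.
-/

section PartialAssociators

variable {R : Type*} [CommSemiring R] [Module R A]

/-- The associator of a bilinear multiplication over an arbitrary commutative semiring of scalars;
over a field it unfolds to the same expression as `assoc`. -/
def bilinAssoc (m : A →ₗ[R] A →ₗ[R] A) (x y z : A) : A :=
  m (m x y) z - m x (m y z)

/-- The left associator `(x ∘ y) ≻ z - x ≻ (y ≻ z)` of two operations `pc = ≺` and `sc = ≻`: the
part of the associator of `∘` which points at `z`. -/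
def leftAssoc (pc sc : A →ₗ[R] A →ₗ[R] A) (x y z : A) : A :=
  sc (sc x y + pc x y) z - sc x (sc y z)

/-- The middle associator `(x ≻ y) ≺ z - x ≻ (y ≺ z)` of two operations `pc = ≺` and `sc = ≻`: the
part of the associator of `∘` which points at `y`. -/
def middleAssoc (pc sc : A →ₗ[R] A →ₗ[R] A) (x y z : A) : A :=
  pc (sc x y) z - sc x (pc y z)

/-- The right associator `(x ≺ y) ≺ z - x ≺ (y ∘ z)` of two operations `pc = ≺` and `sc = ≻`: the
part of the associator of `∘` which points at `x`. -/
def rightAssoc (pc sc : A →ₗ[R] A →ₗ[R] A) (x y z : A) : A :=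
  pc (pc x y) z - pc x (sc y z + pc y z)

theorem bilinAssoc_add (pc sc : A →ₗ[R] A →ₗ[R] A) (x y z : A) :
    bilinAssoc (pc + sc) x y z =
      leftAssoc pc sc x y z + middleAssoc pc sc x y z + rightAssoc pc sc x y z := by
  simp only [bilinAssoc, leftAssoc, middleAssoc, rightAssoc, LinearMap.add_apply, map_add]
  abel

variable {pc sc : A →ₗ[R] A →ₗ[R] A}

theorem bilinAssoc_add_swap_left
    (left_swap : ∀ x y z, leftAssoc pc sc x y z = -leftAssoc pc sc y x z)
    (middle_swap : ∀ x y z, middleAssoc pc sc x y z = -rightAssoc pc sc y x z) (x y z : A) :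
    bilinAssoc (pc + sc) x y z = -bilinAssoc (pc + sc) y x z := by
  rw [bilinAssoc_add, bilinAssoc_add, left_swap x y z, middle_swap x y z, middle_swap y x z]
  abel

theorem bilinAssoc_add_swap_right
    (right_swap : ∀ x y z, rightAssoc pc sc x y z = -rightAssoc pc sc x z y)
    (middle_swap : ∀ x y z, middleAssoc pc sc x y z = -leftAssoc pc sc x z y) (x y z : A) :
    bilinAssoc (pc + sc) x y z = -bilinAssoc (pc + sc) x z y := by
  rw [bilinAssoc_add, bilinAssoc_add, right_swap x y z, middle_swap x y z, middle_swap x z y]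
  abel

theorem isAltMul_of_isPreAltMul_general
    (left_swap : ∀ x y z, leftAssoc pc sc x y z = -leftAssoc pc sc y x z)
    (right_swap : ∀ x y z, rightAssoc pc sc x y z = -rightAssoc pc sc x z y)
    (middle_swap_left : ∀ x y z, middleAssoc pc sc x y z = -rightAssoc pc sc y x z)
    (middle_swap_right : ∀ x y z, middleAssoc pc sc x y z = -leftAssoc pc sc x z y) :
    (∀ x y z, bilinAssoc (pc + sc) x y z = -bilinAssoc (pc + sc) y x z) ∧
      (∀ x y z, bilinAssoc (pc + sc) x y z = -bilinAssoc (pc + sc) x z y) :=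
  ⟨bilinAssoc_add_swap_left left_swap middle_swap_left,
    bilinAssoc_add_swap_right right_swap middle_swap_right⟩

end PartialAssociators

namespace IsPreAltMul

variable {pc sc : A →ₗ[K] A →ₗ[K] A}

theorem leftAssoc_swap (h : IsPreAltMul pc sc) (x y z : A) :
    leftAssoc pc sc x y z = -leftAssoc pc sc y x z :=
  eq_neg_of_add_eq_zero_left ((add_sub_assoc _ _ _).symm.trans (h.1 x y z))

theorem rightAssoc_swap (h : IsPreAltMul pc sc) (x y z : A) :
    rightAssoc pc sc x y z = -rightAssoc pc sc x z y :=
  eq_neg_of_add_eq_zero_left ((add_sub_assoc _ _ _).symm.trans (h.2.1 x y z))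

theorem middleAssoc_swap_left (h : IsPreAltMul pc sc) (x y z : A) :
    middleAssoc pc sc x y z = -rightAssoc pc sc y x z :=
  eq_neg_of_add_eq_zero_left ((add_sub_assoc _ _ _).symm.trans (h.2.2.1 x y z))

theorem middleAssoc_swap_right (h : IsPreAltMul pc sc) (x y z : A) :
    middleAssoc pc sc x y z = -leftAssoc pc sc x z y :=
  eq_neg_of_add_eq_zero_left ((add_sub_assoc _ _ _).symm.trans (h.2.2.2 x y z))

end IsPreAltMul

/-- Let `(A, ≺, ≻)` be a pre-alternative algebra over a field `K` of characteristic
`≠ 2, 3`.  Then `x ∘ y := x ≺ y + x ≻ y` makes `A` an alternative algebra. -/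
theorem isAltMul_of_isPreAltMul
    (h2 : ringChar K ≠ 2) (h3 : ringChar K ≠ 3)
    (pc sc : A →ₗ[K] A →ₗ[K] A) (h : IsPreAltMul pc sc) :
    IsAltMul (pc + sc) :=
  isAltMul_of_isPreAltMul_general h.leftAssoc_swap h.rightAssoc_swap h.middleAssoc_swap_left
    h.middleAssoc_swap_right

end AltExtend
end

section
/- Let A be an alternative algebra over a field K of characteristic ≠ 2,3, V a K-vector space, and Ω(A,V) = (▷, ◁, ⊵, ⊴, *, ω) an extending datum of A by V such that the unified product A♮V is an alternative algebra. Then the maps ▷: A×V→V and ◁: V×A→V make V a bimodule over A. -/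
namespace AltExtend

variable {K : Type*} [Field K]
variable {A : Type*} [AddCommGroup A] [Module K A]
variable {V : Type*} [AddCommGroup V] [Module K V]

/-- `(V, tr, tl)` is a bimodule over the alternative algebra `(A, m)`, where
`tr x v = x ▷ v` and `tl v x = v ◁ x`. -/
def IsAltBimodule (m : A →ₗ[K] A →ₗ[K] A)
    (tr : A →ₗ[K] V →ₗ[K] V) (tl : V →ₗ[K] A →ₗ[K] V) : Prop :=
  (∀ x y : A, ∀ v : V,
    tr (m x y) v - tr x (tr y v) + tr (m y x) v - tr y (tr x v) = 0) ∧
  (∀ x y : A, ∀ v : V,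
    tl (tl v x) y - tl v (m x y) + tl (tl v y) x - tl v (m y x) = 0) ∧
  (∀ x y : A, ∀ v : V,
    tl v (m x y) - tl (tl v x) y + tr x (tl v y) - tl (tr x v) y = 0) ∧
  (∀ x y : A, ∀ v : V,
    tr (m x y) v - tr x (tr y v) + tl (tr x v) y - tr x (tl v y) = 0)

/-- The unified product multiplication on `A × V` attached to an extending datum
`Ω(A,V) = (tr, tl, pr, pl, st, om)`:
`(x,u) • (y,v) = (x∘y + u⊵y + x⊴v + ω(u,v), u*v + x▷v + u◁y)`. -/
def unifiedMul (m : A →ₗ[K] A →ₗ[K] A)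
    (tr : A →ₗ[K] V →ₗ[K] V) (tl : V →ₗ[K] A →ₗ[K] V)
    (pr : V →ₗ[K] A →ₗ[K] A) (pl : A →ₗ[K] V →ₗ[K] A)
    (st : V →ₗ[K] V →ₗ[K] V) (om : V →ₗ[K] V →ₗ[K] A) :
    (A × V) →ₗ[K] (A × V) →ₗ[K] (A × V) :=
  LinearMap.mk₂ K
    (fun p q => (m p.1 q.1 + pr p.2 q.1 + pl p.1 q.2 + om p.2 q.2,
                 st p.2 q.2 + tr p.1 q.2 + tl p.2 q.1))
    (fun p p' q => by simp [Prod.ext_iff]; constructor <;> abel)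
    (fun c p q => by simp [Prod.ext_iff, smul_add])
    (fun p q q' => by simp [Prod.ext_iff]; constructor <;> abel)
    (fun c p q => by simp [Prod.ext_iff, smul_add])

/-!
Modulo `A`, left and right multiplication by elements of `A` in `A ♮ V` act on `V` through `▷` and
`◁`, and `A` is closed under the product. Hence the `V`-component of an associator with two
entries in `A` involves only `∘`, `▷` and `◁`, and the four bimodule identities are the
`V`-components of skew-symmetry identities for such associators.
-/

section UnifiedMul

variable (m : A →ₗ[K] A →ₗ[K] A)
  (tr : A →ₗ[K] V →ₗ[K] V) (tl : V →ₗ[K] A →ₗ[K] V)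
  (pr : V →ₗ[K] A →ₗ[K] A) (pl : A →ₗ[K] V →ₗ[K] A)
  (st : V →ₗ[K] V →ₗ[K] V) (om : V →ₗ[K] V →ₗ[K] A)

theorem unifiedMul_inl_inl (x y : A) :
    unifiedMul m tr tl pr pl st om (x, 0) (y, 0) = (m x y, 0) := by
  simp [unifiedMul]

theorem snd_unifiedMul_inl_left (x : A) (q : A × V) :
    (unifiedMul m tr tl pr pl st om (x, 0) q).2 = tr x q.2 := by
  simp [unifiedMul]

theorem snd_unifiedMul_inl_right (p : A × V) (y : A) :
    (unifiedMul m tr tl pr pl st om p (y, 0)).2 = tl p.2 y := by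
  simp [unifiedMul]

theorem snd_assoc_unifiedMul_inl_left_mid (x y : A) (p : A × V) :
    (assoc (unifiedMul m tr tl pr pl st om) (x, 0) (y, 0) p).2 =
      tr (m x y) p.2 - tr x (tr y p.2) := by
  simp only [assoc, Prod.snd_sub, unifiedMul_inl_inl, snd_unifiedMul_inl_left]

theorem snd_assoc_unifiedMul_inl_left_right (x : A) (p : A × V) (y : A) :
    (assoc (unifiedMul m tr tl pr pl st om) (x, 0) p (y, 0)).2 =
      tl (tr x p.2) y - tr x (tl p.2 y) := by
  simp only [assoc, Prod.snd_sub, snd_unifiedMul_inl_left, snd_unifiedMul_inl_right]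

theorem snd_assoc_unifiedMul_inl_mid_right (p : A × V) (x y : A) :
    (assoc (unifiedMul m tr tl pr pl st om) p (x, 0) (y, 0)).2 =
      tl (tl p.2 x) y - tl p.2 (m x y) := by
  simp only [assoc, Prod.snd_sub, unifiedMul_inl_inl, snd_unifiedMul_inl_right]

end UnifiedMul

theorem isAltBimodule_of_unifiedMul_isAltMul_general
    (m : A →ₗ[K] A →ₗ[K] A)
    (tr : A →ₗ[K] V →ₗ[K] V) (tl : V →ₗ[K] A →ₗ[K] V)
    (pr : V →ₗ[K] A →ₗ[K] A) (pl : A →ₗ[K] V →ₗ[K] A)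
    (st : V →ₗ[K] V →ₗ[K] V) (om : V →ₗ[K] V →ₗ[K] A)
    (h : IsAltMul (unifiedMul m tr tl pr pl st om)) :
    IsAltBimodule m tr tl := by
  have left_skew (p q r : A × V) := congrArg Prod.snd (h.1 p q r)
  have right_skew (p q r : A × V) := congrArg Prod.snd (h.2 p q r)
  simp only [Prod.snd_neg] at left_skew right_skew
  refine ⟨fun x y v => ?_, fun x y v => ?_, fun x y v => ?_, fun x y v => ?_⟩
  · have skew := left_skew (x, 0) (y, 0) (0, v)
    simp only [snd_assoc_unifiedMul_inl_left_mid] at skew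
    rwa [add_sub_assoc, ← eq_neg_iff_add_eq_zero]
  · have skew := right_skew (0, v) (x, 0) (y, 0)
    simp only [snd_assoc_unifiedMul_inl_mid_right] at skew
    rwa [add_sub_assoc, ← eq_neg_iff_add_eq_zero]
  · have skew := left_skew (x, 0) (0, v) (y, 0)
    simp only [snd_assoc_unifiedMul_inl_left_right, snd_assoc_unifiedMul_inl_mid_right,
      neg_sub] at skew
    rw [← skew, sub_add_cancel, sub_self]
  · have skew := right_skew (x, 0) (y, 0) (0, v)
    simp only [snd_assoc_unifiedMul_inl_left_mid, snd_assoc_unifiedMul_inl_left_right] at skew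
    rwa [add_sub_assoc, ← eq_neg_iff_add_eq_zero]

/-- If the unified product `A ♮ V` attached to an extending datum of the alternative
algebra `A` by the vector space `V` is an alternative algebra, then `(V, tr, tl)` is a
bimodule over `A`. -/
theorem isAltBimodule_of_unifiedMul_isAltMul
    (h2 : ringChar K ≠ 2) (h3 : ringChar K ≠ 3)
    (m : A →ₗ[K] A →ₗ[K] A) (hm : IsAltMul m)
    (tr : A →ₗ[K] V →ₗ[K] V) (tl : V →ₗ[K] A →ₗ[K] V)
    (pr : V →ₗ[K] A →ₗ[K] A) (pl : A →ₗ[K] V →ₗ[K] A)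
    (st : V →ₗ[K] V →ₗ[K] V) (om : V →ₗ[K] V →ₗ[K] A)
    (h : IsAltMul (unifiedMul m tr tl pr pl st om)) :
    IsAltBimodule m tr tl :=
  isAltBimodule_of_unifiedMul_isAltMul_general m tr tl pr pl st om h

end AltExtend
end

section
/- Let (E, ∘) be an alternative algebra over a field K of characteristic ≠ 2,3 and A ⊆ E a subalgebra. Let p: E → A be a K-linear map with p(x) = x for all x ∈ A, and set V := ker(p). Define bilinear maps by u⊵x := p(u∘x), u◁x := u∘x − p(u∘x), x⊴u := p(x∘u), x▷u := x∘u − p(x∘u), ω(u,v) := p(u∘v), u*v := u∘v − p(u∘v) for x ∈ A, u,v ∈ V. Then Ω(A,V) = (▷, ◁, ⊵, ⊴, *, ω) is an extending datum whose unified product A♮V is an alternative algebra, and the map φ: A♮V → E defined by φ(x,u) := x + u is an isomorphism of alternative algebras satisfying φ(x,0) = x for all x ∈ A (it stabilizes A) and (φ(x,u) − p(φ(x,u))) = u for all (x,u) (it co-stabilizes V). -/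
namespace AltExtend

variable {K : Type*} [Field K]
variable {A : Type*} [AddCommGroup A] [Module K A]
variable {V : Type*} [AddCommGroup V] [Module K V]

/-!
The inclusions `i : A → E` and `j : V → E` send the two components of a product in `A ♮ V` to
elements of `E` whose sum is the product in `E`; for the canonical datum, this is the splitting
`e = p e + (e - p e)` applied to `u∘x`, `x∘u` and `u∘v`. Hence `φ = i + j` is multiplicative. It is
bijective because `E = A ⊕ ker p`, and alternativity is pulled back along the injective
homomorphism `φ`.
-/

section Associator

variable {B : Type*} [AddCommGroup B] [Module K B]
  {m : A →ₗ[K] A →ₗ[K] A} {n : B →ₗ[K] B →ₗ[K] B} {f : A →ₗ[K] B}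

theorem map_assoc (hf : ∀ x y, f (m x y) = n (f x) (f y)) (x y z : A) :
    f (assoc m x y z) = assoc n (f x) (f y) (f z) := by
  simp only [assoc, map_sub, hf]

theorem IsAltMul.of_injective (hn : IsAltMul n) (hinj : Function.Injective f)
    (hf : ∀ x y, f (m x y) = n (f x) (f y)) : IsAltMul m :=
  ⟨fun x y z => hinj <| by rw [map_neg, map_assoc hf, map_assoc hf, hn.1],
    fun x y z => hinj <| by rw [map_neg, map_assoc hf, map_assoc hf, hn.2]⟩

end Associator

section UnifiedProduct

variable {E : Type*} [AddCommGroup E] [Module K E] {mE : E →ₗ[K] E →ₗ[K] E}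
  {mA : A →ₗ[K] A →ₗ[K] A} {tr : A →ₗ[K] V →ₗ[K] V} {tl : V →ₗ[K] A →ₗ[K] V}
  {pr : V →ₗ[K] A →ₗ[K] A} {pl : A →ₗ[K] V →ₗ[K] A}
  {st : V →ₗ[K] V →ₗ[K] V} {om : V →ₗ[K] V →ₗ[K] A} {i : A →ₗ[K] E} {j : V →ₗ[K] E}

theorem coprod_unifiedMul
    (hAA : ∀ x y, i (mA x y) = mE (i x) (i y))
    (hVA : ∀ u x, i (pr u x) + j (tl u x) = mE (j u) (i x))
    (hAV : ∀ x u, i (pl x u) + j (tr x u) = mE (i x) (j u))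
    (hVV : ∀ u v, i (om u v) + j (st u v) = mE (j u) (j v)) (q q' : A × V) :
    i.coprod j (unifiedMul mA tr tl pr pl st om q q') =
      mE (i.coprod j q) (i.coprod j q') := by
  simp only [unifiedMul, LinearMap.mk₂_apply, LinearMap.coprod_apply, map_add,
    LinearMap.add_apply, ← hAA, ← hVA, ← hAV, ← hVV]
  abel

end UnifiedProduct

section Projection

variable {R M : Type*}

theorem bijective_coprod_subtype_of_isCompl [Ring R] [AddCommGroup M] [Module R M]
    {S T : Submodule R M} (h : IsCompl S T) :
    Function.Bijective (S.subtype.coprod T.subtype) :=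
  (S.prodEquivOfIsCompl T h).bijective

theorem apply_coprod_subtype_ker_of_isProj [Semiring R] [AddCommMonoid M] [Module R M]
    {S : Submodule R M} {p : M →ₗ[R] M} (hp : LinearMap.IsProj S p) (q : S × LinearMap.ker p) :
    p (S.subtype.coprod (LinearMap.ker p).subtype q) = q.1 := by
  simp [LinearMap.coprod_apply, hp.map_id]

end Projection

theorem subalgebra_isomorphic_to_unifiedProduct_general
    {E : Type*} [AddCommGroup E] [Module K E]
    {mE : E →ₗ[K] E →ₗ[K] E} (hE : IsAltMul mE)
    {A : Submodule K E} {p : E →ₗ[K] E} (hp : LinearMap.IsProj A p)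
    {mA : A →ₗ[K] A →ₗ[K] A}
    (hmA : ∀ x y : A, (mA x y : E) = mE x y)
    {tr : A →ₗ[K] (LinearMap.ker p) →ₗ[K] (LinearMap.ker p)}
    {tl : (LinearMap.ker p) →ₗ[K] A →ₗ[K] (LinearMap.ker p)}
    {pr : (LinearMap.ker p) →ₗ[K] A →ₗ[K] A}
    {pl : A →ₗ[K] (LinearMap.ker p) →ₗ[K] A}
    {st : (LinearMap.ker p) →ₗ[K] (LinearMap.ker p) →ₗ[K] (LinearMap.ker p)}
    {om : (LinearMap.ker p) →ₗ[K] (LinearMap.ker p) →ₗ[K] A}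
    (hpr : ∀ (u : LinearMap.ker p) (x : A), (pr u x : E) = p (mE u x))
    (htl : ∀ (u : LinearMap.ker p) (x : A), (tl u x : E) = mE u x - p (mE u x))
    (hpl : ∀ (x : A) (u : LinearMap.ker p), (pl x u : E) = p (mE x u))
    (htr : ∀ (x : A) (u : LinearMap.ker p), (tr x u : E) = mE x u - p (mE x u))
    (hom : ∀ u v : LinearMap.ker p, (om u v : E) = p (mE u v))
    (hst : ∀ u v : LinearMap.ker p, (st u v : E) = mE u v - p (mE u v)) :
    IsAltMul (unifiedMul mA tr tl pr pl st om) ∧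
    (∀ q : A × LinearMap.ker p,
      (A.subtype.coprod (LinearMap.ker p).subtype) q = (q.1 : E) + (q.2 : E)) ∧
    Function.Bijective (A.subtype.coprod (LinearMap.ker p).subtype) ∧
    (∀ q q' : A × LinearMap.ker p,
      (A.subtype.coprod (LinearMap.ker p).subtype) (unifiedMul mA tr tl pr pl st om q q')
        = mE ((A.subtype.coprod (LinearMap.ker p).subtype) q)
            ((A.subtype.coprod (LinearMap.ker p).subtype) q')) ∧
    (∀ x : A, (A.subtype.coprod (LinearMap.ker p).subtype) (x, 0) = (x : E)) ∧
    (∀ q : A × LinearMap.ker p,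
      (A.subtype.coprod (LinearMap.ker p).subtype) q
        - p ((A.subtype.coprod (LinearMap.ker p).subtype) q) = (q.2 : E)) := by
  have hbij : Function.Bijective (A.subtype.coprod (LinearMap.ker p).subtype) :=
    bijective_coprod_subtype_of_isCompl hp.isCompl
  have hmul : ∀ q q' : A × LinearMap.ker p,
      (A.subtype.coprod (LinearMap.ker p).subtype) (unifiedMul mA tr tl pr pl st om q q')
        = mE ((A.subtype.coprod (LinearMap.ker p).subtype) q)
            ((A.subtype.coprod (LinearMap.ker p).subtype) q') :=
    coprod_unifiedMul hmA (fun u x => by simp [hpr, htl]) (fun x u => by simp [hpl, htr])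
      (fun u v => by simp [hom, hst])
  refine ⟨hE.of_injective hbij.injective hmul, LinearMap.coprod_apply _ _, hbij, hmul,
    fun x => by simp, fun q => ?_⟩
  rw [apply_coprod_subtype_ker_of_isProj hp]
  exact add_sub_cancel_left (q.1 : E) q.2

/-- Let `(E, ∘)` be an alternative algebra, `A ⊆ E` a subalgebra, `p : E → A ⊆ E` a linear
retraction onto `A` and `V := ker p`.  Then the canonical extending datum
`u⊵x := p(u∘x)`, `u◁x := u∘x − p(u∘x)`, `x⊴u := p(x∘u)`, `x▷u := x∘u − p(x∘u)`,
`ω(u,v) := p(u∘v)`, `u*v := u∘v − p(u∘v)` makes the unified product `A ♮ V` an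
alternative algebra, and `φ(x,u) := x + u` is an isomorphism of alternative algebras
`A ♮ V ≅ E` which stabilizes `A` and co-stabilizes `V`. -/
theorem subalgebra_isomorphic_to_unifiedProduct
    {E : Type*} [AddCommGroup E] [Module K E]
    (h2 : ringChar K ≠ 2) (h3 : ringChar K ≠ 3)
    (mE : E →ₗ[K] E →ₗ[K] E) (hE : IsAltMul mE)
    (A : Submodule K E) (hA : ∀ x ∈ A, ∀ y ∈ A, mE x y ∈ A)
    (p : E →ₗ[K] E) (hpmem : ∀ e : E, p e ∈ A) (hpid : ∀ x ∈ A, p x = x)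
    (mA : A →ₗ[K] A →ₗ[K] A)
    (hmA : ∀ x y : A, (mA x y : E) = mE x y)
    (tr : A →ₗ[K] (LinearMap.ker p) →ₗ[K] (LinearMap.ker p))
    (tl : (LinearMap.ker p) →ₗ[K] A →ₗ[K] (LinearMap.ker p))
    (pr : (LinearMap.ker p) →ₗ[K] A →ₗ[K] A)
    (pl : A →ₗ[K] (LinearMap.ker p) →ₗ[K] A)
    (st : (LinearMap.ker p) →ₗ[K] (LinearMap.ker p) →ₗ[K] (LinearMap.ker p))
    (om : (LinearMap.ker p) →ₗ[K] (LinearMap.ker p) →ₗ[K] A)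
    (hpr : ∀ (u : LinearMap.ker p) (x : A), (pr u x : E) = p (mE u x))
    (htl : ∀ (u : LinearMap.ker p) (x : A), ((tl u x : LinearMap.ker p) : E) = mE u x - p (mE u x))
    (hpl : ∀ (x : A) (u : LinearMap.ker p), (pl x u : E) = p (mE x u))
    (htr : ∀ (x : A) (u : LinearMap.ker p), ((tr x u : LinearMap.ker p) : E) = mE x u - p (mE x u))
    (hom : ∀ u v : LinearMap.ker p, (om u v : E) = p (mE u v))
    (hst : ∀ u v : LinearMap.ker p, ((st u v : LinearMap.ker p) : E) = mE u v - p (mE u v)) :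
    IsAltMul (unifiedMul mA tr tl pr pl st om) ∧
    (∀ q : A × LinearMap.ker p,
      (A.subtype.coprod (LinearMap.ker p).subtype) q = (q.1 : E) + (q.2 : E)) ∧
    Function.Bijective (A.subtype.coprod (LinearMap.ker p).subtype) ∧
    (∀ q q' : A × LinearMap.ker p,
      (A.subtype.coprod (LinearMap.ker p).subtype) (unifiedMul mA tr tl pr pl st om q q')
        = mE ((A.subtype.coprod (LinearMap.ker p).subtype) q)
            ((A.subtype.coprod (LinearMap.ker p).subtype) q')) ∧
    (∀ x : A, (A.subtype.coprod (LinearMap.ker p).subtype) (x, 0) = (x : E)) ∧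
    (∀ q : A × LinearMap.ker p,
      (A.subtype.coprod (LinearMap.ker p).subtype) q
        - p ((A.subtype.coprod (LinearMap.ker p).subtype) q) = (q.2 : E)) := by
  exact subalgebra_isomorphic_to_unifiedProduct_general hE ⟨hpmem, hpid⟩ hmA hpr htl hpl htr hom hst

end AltExtend
end

section
/- Let A be an alternative algebra over a field K of characteristic ≠ 2,3, V a K-vector space, and let Ω(A,V) = (▷, ◁, ⊵, ⊴, *, ω) and Ω'(A,V) = (▷', ◁', ⊵', ⊴', *', ω') be two extending structures of A by V (i.e. their unified products A♮V and A♮'V are alternative algebras). For linear maps r: V→A and s: V→V, define φ: A♮V → A♮'V by φ(x,u) := (x + r(u), s(u)). Then: (1) φ is a homomorphism of alternative algebras if and only if for all x ∈ A, u,v ∈ V: s(u◁x) = s(u)◁'x; s(x▷u) = x▷'s(u); s(u*v) = r(u)▷'s(v) + s(u)◁'r(v) + s(u)*'s(v); r(u◁x) = r(u)∘x − u⊵x + s(u)⊵'x; r(x⊴u) = x∘r(u) − x⊴u + x⊴'s(u); r(u*v) = r(u)∘r(v) + ω'(s(u),s(v)) − ω(u,v) + r(u)⊴'s(v) + s(u)⊵'r(v).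 (2) Every algebra homomorphism ψ: A♮V → A♮'V with ψ(x,0) = (x,0) for all x ∈ A is of this form for a unique pair (r,s). (3) φ is an isomorphism if and only if s is bijective, and φ co-stabilizes V (i.e. the V-component of φ(x,u) is u) if and only if s = id_V. -/
namespace AltExtend

variable {K : Type*} [Field K]
variable {A : Type*} [AddCommGroup A] [Module K A]
variable {V : Type*} [AddCommGroup V] [Module K V]

/-- The linear map `φ_{r,s} : A × V → A × V`, `φ(x,u) = (x + r(u), s(u))`. -/
def phiRS (r : V →ₗ[K] A) (s : V →ₗ[K] V) : (A × V) →ₗ[K] (A × V) :=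
  (LinearMap.fst K A V + r ∘ₗ LinearMap.snd K A V).prod (s ∘ₗ LinearMap.snd K A V)

/-- The six compatibility conditions on the pair `(r,s)` relating the two extending
data `Ω(A,V)` and `Ω'(A,V)`. -/
def HomPairConditions (m : A →ₗ[K] A →ₗ[K] A)
    (tr : A →ₗ[K] V →ₗ[K] V) (tl : V →ₗ[K] A →ₗ[K] V)
    (pr : V →ₗ[K] A →ₗ[K] A) (pl : A →ₗ[K] V →ₗ[K] A)
    (st : V →ₗ[K] V →ₗ[K] V) (om : V →ₗ[K] V →ₗ[K] A)
    (tr' : A →ₗ[K] V →ₗ[K] V) (tl' : V →ₗ[K] A →ₗ[K] V)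
    (pr' : V →ₗ[K] A →ₗ[K] A) (pl' : A →ₗ[K] V →ₗ[K] A)
    (st' : V →ₗ[K] V →ₗ[K] V) (om' : V →ₗ[K] V →ₗ[K] A)
    (r : V →ₗ[K] A) (s : V →ₗ[K] V) : Prop :=
  (∀ (u : V) (x : A), s (tl u x) = tl' (s u) x) ∧
  (∀ (x : A) (u : V), s (tr x u) = tr' x (s u)) ∧
  (∀ u v : V, s (st u v) = tr' (r u) (s v) + tl' (s u) (r v) + st' (s u) (s v)) ∧
  (∀ (u : V) (x : A), r (tl u x) = m (r u) x - pr u x + pr' (s u) x) ∧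
  (∀ (x : A) (u : V), r (tr x u) = m x (r u) - pl x u + pl' x (s u)) ∧
  (∀ u v : V, r (st u v)
    = m (r u) (r v) + om' (s u) (s v) - om u v + pl' (r u) (s v) + pr' (s u) (r v))

/-!
By bilinearity, multiplicativity of `φ_{r,s}` need only be tested on pairs of elements of the
summands `A` and `V`. On `A × A` it is automatic, and each of the pairings `V × A`, `A × V`, `V × V`
yields two of the six compatibility conditions, one per component.
Moreover `φ_{r,s} = (id × s) ∘ φ_{r,id}`, where the shear `φ_{r,id}` is inverted by `φ_{-r,id}`, so
that `φ_{r,s}` is bijective exactly when `s` is.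
-/

theorem bilin_prod_ext_iff {R M N M' N' P : Type*} [CommSemiring R]
    [AddCommMonoid M] [AddCommMonoid N] [AddCommMonoid M'] [AddCommMonoid N'] [AddCommMonoid P]
    [Module R M] [Module R N] [Module R M'] [Module R N'] [Module R P]
    {B C : (M × N) →ₗ[R] (M' × N') →ₗ[R] P} :
    B = C ↔
      (∀ x y, B (x, 0) (y, 0) = C (x, 0) (y, 0)) ∧
      (∀ x v, B (x, 0) (0, v) = C (x, 0) (0, v)) ∧
      (∀ u y, B (0, u) (y, 0) = C (0, u) (y, 0)) ∧
      (∀ u v, B (0, u) (0, v) = C (0, u) (0, v)) := by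
  refine ⟨fun h => by simp [h], fun ⟨hMM, hMN, hNM, hNN⟩ => ?_⟩
  ext x y
  · exact hMM x y
  · exact hMN x y
  · exact hNM x y
  · exact hNN x y

section phiRS

variable (r : V →ₗ[K] A) (s : V →ₗ[K] V)

@[simp]
theorem phiRS_apply (x : A) (u : V) : phiRS r s (x, u) = (x + r u, s u) := rfl

theorem eq_phiRS_iff {ψ : (A × V) →ₗ[K] (A × V)} {r : V →ₗ[K] A} {s : V →ₗ[K] V} :
    ψ = phiRS r s ↔ (∀ x, ψ (x, 0) = (x, 0)) ∧ ∀ u, ψ (0, u) = (r u, s u) := by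
  rw [LinearMap.prod_ext_iff, LinearMap.ext_iff, LinearMap.ext_iff]
  simp

theorem existsUnique_eq_phiRS_iff (ψ : (A × V) →ₗ[K] (A × V)) :
    (∃! rs : (V →ₗ[K] A) × (V →ₗ[K] V), ψ = phiRS rs.1 rs.2) ↔ ∀ x, ψ (x, 0) = (x, 0) := by
  refine ⟨fun ⟨_, h, _⟩ => (eq_phiRS_iff.1 h).1, fun hψ => ?_⟩
  refine ⟨(LinearMap.fst K A V ∘ₗ ψ ∘ₗ LinearMap.inr K A V,
    LinearMap.snd K A V ∘ₗ ψ ∘ₗ LinearMap.inr K A V), eq_phiRS_iff.2 ⟨hψ, fun u => rfl⟩, ?_⟩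
  rintro ⟨r, s⟩ h
  have hV := (eq_phiRS_iff.1 h).2
  ext u <;> simp [hV]

theorem bijective_phiRS_id : Function.Bijective (phiRS r LinearMap.id) :=
  Function.bijective_iff_has_inverse.2
    ⟨phiRS (-r) LinearMap.id, fun ⟨x, u⟩ => by simp, fun ⟨x, u⟩ => by simp⟩

theorem bijective_phiRS_iff : Function.Bijective (phiRS r s) ↔ Function.Bijective s := by
  have factor : ⇑(phiRS r s) = Prod.map id s ∘ phiRS r LinearMap.id := rfl
  rw [factor, (bijective_phiRS_id r).of_comp_iff, Prod.map_bijective]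
  exact and_iff_right Function.bijective_id

theorem forall_snd_phiRS_eq_iff : (∀ q, (phiRS r s q).2 = q.2) ↔ s = LinearMap.id := by
  simp [LinearMap.ext_iff]

end phiRS

section unifiedMul

variable (m : A →ₗ[K] A →ₗ[K] A)
  (tr : A →ₗ[K] V →ₗ[K] V) (tl : V →ₗ[K] A →ₗ[K] V)
  (pr : V →ₗ[K] A →ₗ[K] A) (pl : A →ₗ[K] V →ₗ[K] A)
  (st : V →ₗ[K] V →ₗ[K] V) (om : V →ₗ[K] V →ₗ[K] A)

@[simp]
theorem unifiedMul_apply (x y : A) (u v : V) :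
    unifiedMul m tr tl pr pl st om (x, u) (y, v) =
      (m x y + pr u y + pl x v + om u v, st u v + tr x v + tl u y) := rfl

variable (tr' : A →ₗ[K] V →ₗ[K] V) (tl' : V →ₗ[K] A →ₗ[K] V)
  (pr' : V →ₗ[K] A →ₗ[K] A) (pl' : A →ₗ[K] V →ₗ[K] A)
  (st' : V →ₗ[K] V →ₗ[K] V) (om' : V →ₗ[K] V →ₗ[K] A)
  (r : V →ₗ[K] A) (s : V →ₗ[K] V)

theorem phiRS_unifiedMul_inl_inl (x y : A) :
    phiRS r s (unifiedMul m tr tl pr pl st om (x, 0) (y, 0)) =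
      unifiedMul m tr' tl' pr' pl' st' om' (phiRS r s (x, 0)) (phiRS r s (y, 0)) := by
  simp

theorem phiRS_unifiedMul_inr_inl_iff (u : V) (x : A) :
    phiRS r s (unifiedMul m tr tl pr pl st om (0, u) (x, 0)) =
        unifiedMul m tr' tl' pr' pl' st' om' (phiRS r s (0, u)) (phiRS r s (x, 0)) ↔
      s (tl u x) = tl' (s u) x ∧ r (tl u x) = m (r u) x - pr u x + pr' (s u) x := by
  simp [← eq_sub_iff_add_eq', sub_add_eq_add_sub, and_comm]

theorem phiRS_unifiedMul_inl_inr_iff (x : A) (u : V) :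
    phiRS r s (unifiedMul m tr tl pr pl st om (x, 0) (0, u)) =
        unifiedMul m tr' tl' pr' pl' st' om' (phiRS r s (x, 0)) (phiRS r s (0, u)) ↔
      s (tr x u) = tr' x (s u) ∧ r (tr x u) = m x (r u) - pl x u + pl' x (s u) := by
  simp [← eq_sub_iff_add_eq', sub_add_eq_add_sub, and_comm]

theorem phiRS_unifiedMul_inr_inr_iff (u v : V) :
    phiRS r s (unifiedMul m tr tl pr pl st om (0, u) (0, v)) =
        unifiedMul m tr' tl' pr' pl' st' om' (phiRS r s (0, u)) (phiRS r s (0, v)) ↔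
      s (st u v) = tr' (r u) (s v) + tl' (s u) (r v) + st' (s u) (s v) ∧
      r (st u v) = m (r u) (r v) + om' (s u) (s v) - om u v
        + pl' (r u) (s v) + pr' (s u) (r v) := by
  simp only [unifiedMul_apply, phiRS_apply, map_zero, LinearMap.zero_apply, zero_add, add_zero,
    Prod.mk.injEq, ← eq_sub_iff_add_eq']
  rw [and_comm]
  congr! 2 <;> abel

theorem phiRS_unifiedMul_iff :
    (∀ q q', phiRS r s (unifiedMul m tr tl pr pl st om q q') =
        unifiedMul m tr' tl' pr' pl' st' om' (phiRS r s q) (phiRS r s q')) ↔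
      HomPairConditions m tr tl pr pl st om tr' tl' pr' pl' st' om' r s := by
  have bilinear_form :
      (∀ q q', phiRS r s (unifiedMul m tr tl pr pl st om q q') =
        unifiedMul m tr' tl' pr' pl' st' om' (phiRS r s q) (phiRS r s q')) ↔
      (unifiedMul m tr tl pr pl st om).compr₂ (phiRS r s) =
        (unifiedMul m tr' tl' pr' pl' st' om').compl₁₂ (phiRS r s) (phiRS r s) := by
    simp only [LinearMap.ext_iff₂, LinearMap.compr₂_apply, LinearMap.compl₁₂_apply]
  rw [bilinear_form, bilin_prod_ext_iff]
  simp only [LinearMap.compr₂_apply, LinearMap.compl₁₂_apply]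
  simp only [phiRS_unifiedMul_inl_inl m tr tl pr pl st om tr' tl' pr' pl' st' om',
    phiRS_unifiedMul_inl_inr_iff, phiRS_unifiedMul_inr_inl_iff, phiRS_unifiedMul_inr_inr_iff,
    forall_and, HomPairConditions]
  tauto

theorem morphisms_of_unified_products_general :
    (∀ (r : V →ₗ[K] A) (s : V →ₗ[K] V),
      (∀ q q' : A × V,
        phiRS r s (unifiedMul m tr tl pr pl st om q q')
          = unifiedMul m tr' tl' pr' pl' st' om' (phiRS r s q) (phiRS r s q')) ↔
      HomPairConditions m tr tl pr pl st om tr' tl' pr' pl' st' om' r s) ∧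
    (∀ ψ : (A × V) →ₗ[K] (A × V),
      (∃! rs : (V →ₗ[K] A) × (V →ₗ[K] V), ψ = phiRS rs.1 rs.2) ↔ ∀ x : A, ψ (x, 0) = (x, 0)) ∧
    (∀ (r : V →ₗ[K] A) (s : V →ₗ[K] V),
      (Function.Bijective (phiRS r s) ↔ Function.Bijective s) ∧
      ((∀ q : A × V, (phiRS r s q).2 = q.2) ↔ s = LinearMap.id)) :=
  ⟨phiRS_unifiedMul_iff m tr tl pr pl st om tr' tl' pr' pl' st' om',
    existsUnique_eq_phiRS_iff,
    fun r s => ⟨bijective_phiRS_iff r s, forall_snd_phiRS_eq_iff r s⟩⟩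

end unifiedMul

/-- Characterization of the alternative algebra morphisms `A ♮ V → A ♮' V` which
stabilize `A`: (1) `φ_{r,s}` is multiplicative iff the six conditions hold;
(2) every multiplicative linear map stabilizing `A` is of the form `φ_{r,s}` for a
unique pair `(r,s)`; (3) a multiplicative `φ_{r,s}` is bijective iff `s` is bijective,
and co-stabilizes `V` iff `s = id`. -/
theorem morphisms_of_unified_products
    (h2 : ringChar K ≠ 2) (h3 : ringChar K ≠ 3)
    (m : A →ₗ[K] A →ₗ[K] A) (hm : IsAltMul m)
    (tr : A →ₗ[K] V →ₗ[K] V) (tl : V →ₗ[K] A →ₗ[K] V)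
    (pr : V →ₗ[K] A →ₗ[K] A) (pl : A →ₗ[K] V →ₗ[K] A)
    (st : V →ₗ[K] V →ₗ[K] V) (om : V →ₗ[K] V →ₗ[K] A)
    (tr' : A →ₗ[K] V →ₗ[K] V) (tl' : V →ₗ[K] A →ₗ[K] V)
    (pr' : V →ₗ[K] A →ₗ[K] A) (pl' : A →ₗ[K] V →ₗ[K] A)
    (st' : V →ₗ[K] V →ₗ[K] V) (om' : V →ₗ[K] V →ₗ[K] A)
    (hΩ : IsAltMul (unifiedMul m tr tl pr pl st om))
    (hΩ' : IsAltMul (unifiedMul m tr' tl' pr' pl' st' om')) :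
    (∀ (r : V →ₗ[K] A) (s : V →ₗ[K] V),
      (∀ q q' : A × V,
        phiRS r s (unifiedMul m tr tl pr pl st om q q')
          = unifiedMul m tr' tl' pr' pl' st' om' (phiRS r s q) (phiRS r s q')) ↔
      HomPairConditions m tr tl pr pl st om tr' tl' pr' pl' st' om' r s) ∧
    (∀ ψ : (A × V) →ₗ[K] (A × V),
      (∀ q q' : A × V,
        ψ (unifiedMul m tr tl pr pl st om q q')
          = unifiedMul m tr' tl' pr' pl' st' om' (ψ q) (ψ q')) →
      (∀ x : A, ψ (x, 0) = (x, 0)) →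
      ∃! rs : (V →ₗ[K] A) × (V →ₗ[K] V), ψ = phiRS rs.1 rs.2) ∧
    (∀ (r : V →ₗ[K] A) (s : V →ₗ[K] V),
      (∀ q q' : A × V,
        phiRS r s (unifiedMul m tr tl pr pl st om q q')
          = unifiedMul m tr' tl' pr' pl' st' om' (phiRS r s q) (phiRS r s q')) →
      (Function.Bijective (phiRS r s) ↔ Function.Bijective s) ∧
      ((∀ q : A × V, (phiRS r s q).2 = q.2) ↔ s = LinearMap.id)) := by
  obtain ⟨hom_iff, form_iff, iso_iff⟩ :=
    morphisms_of_unified_products_general m tr tl pr pl st om tr' tl' pr' pl' st' om'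
  exact ⟨hom_iff, fun ψ _ => (form_iff ψ).2, fun r s _ => iso_iff r s⟩

end AltExtend
end

section
/- Let (A, B, ▷, ◁, ⊵, ⊴) be a matched pair of alternative algebras over a field K of characteristic ≠ 2,3 with bicrossed product E = A⋈B, and let r: B → A be a deformation map of the matched pair. Then: (1) the image of the linear map f_r: B → A⋈B, f_r(u) := (r(u), u), is a subalgebra of A⋈B; (2) the vector space B with the deformed product u∘_r v := u∘v + r(u)▷v + u◁r(v) is an alternative algebra B_r, and f_r is an algebra isomorphism from B_r onto Im(f_r); (3) Im(f_r) is an A-complement of A⋈B, i.e. A⋈B = A ⊕ Im(f_r) as vector spaces. -/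
/-!
The deformation identity says exactly that `f_r` carries the deformed product to the product of
`A ⋈ B`. As `f_r` is injective, the alternative laws of `A ⋈ B` then pull back to `B_r`; and as
`f_r` is a section of the projection `A ⋈ B → B`, its image is a complement of the kernel, `A`.
-/

namespace AltExtend

variable {K : Type*} [Field K]
variable {A : Type*} [AddCommGroup A] [Module K A]
variable {B : Type*} [AddCommGroup B] [Module K B]

/-- The bicrossed product multiplication on `A × B`:
`(x,u) • (y,v) = (x∘y + u⊵y + x⊴v, u*v + x▷v + u◁y)`, where `tr x v = x ▷ v`,
`tl u y = u ◁ y`, `pr u y = u ⊵ y` and `pl x v = x ⊴ v`. -/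
def matchedMul (m : A →ₗ[K] A →ₗ[K] A) (mB : B →ₗ[K] B →ₗ[K] B)
    (tr : A →ₗ[K] B →ₗ[K] B) (tl : B →ₗ[K] A →ₗ[K] B)
    (pr : B →ₗ[K] A →ₗ[K] A) (pl : A →ₗ[K] B →ₗ[K] A) :
    (A × B) →ₗ[K] (A × B) →ₗ[K] (A × B) :=
  LinearMap.mk₂ K
    (fun p q => (m p.1 q.1 + pr p.2 q.1 + pl p.1 q.2,
                 mB p.2 q.2 + tr p.1 q.2 + tl p.2 q.1))
    (fun p p' q => by simp [Prod.ext_iff]; constructor <;> abel)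
    (fun c p q => by simp [Prod.ext_iff, smul_add])
    (fun p q q' => by simp [Prod.ext_iff]; constructor <;> abel)
    (fun c p q => by simp [Prod.ext_iff, smul_add])

/-- `r : B → A` is a deformation map of the matched pair `(A, B, ▷, ◁, ⊵, ⊴)`. -/
def IsDefMap (m : A →ₗ[K] A →ₗ[K] A) (mB : B →ₗ[K] B →ₗ[K] B)
    (tr : A →ₗ[K] B →ₗ[K] B) (tl : B →ₗ[K] A →ₗ[K] B)
    (pr : B →ₗ[K] A →ₗ[K] A) (pl : A →ₗ[K] B →ₗ[K] A)
    (r : B →ₗ[K] A) : Prop :=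
  ∀ u v : B, r (mB u v) - m (r u) (r v)
    = pr u (r v) + pl (r u) v - r (tr (r u) v + tl u (r v))

/-- The `r`-deformation of the product of `B`: `u ∘_r v := u∘v + r(u)▷v + u◁r(v)`. -/
def deformedMul (mB : B →ₗ[K] B →ₗ[K] B)
    (tr : A →ₗ[K] B →ₗ[K] B) (tl : B →ₗ[K] A →ₗ[K] B)
    (r : B →ₗ[K] A) : B →ₗ[K] B →ₗ[K] B :=
  LinearMap.mk₂ K (fun u v => mB u v + tr (r u) v + tl u (r v))
    (fun u u' v => by simp; abel)
    (fun c u v => by simp)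
    (fun u v v' => by simp; abel)
    (fun c u v => by simp)

theorem map_assoc_s10 {m : A →ₗ[K] A →ₗ[K] A} {mB : B →ₗ[K] B →ₗ[K] B} (f : B →ₗ[K] A)
    (hf : ∀ u v, f (mB u v) = m (f u) (f v)) (u v w : B) :
    f (assoc mB u v w) = assoc m (f u) (f v) (f w) := by
  simp only [assoc, map_sub, hf]

theorem IsAltMul.of_injective_s10 {m : A →ₗ[K] A →ₗ[K] A} {mB : B →ₗ[K] B →ₗ[K] B} {f : B →ₗ[K] A}
    (hm : IsAltMul m) (hinj : Function.Injective f)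
    (hf : ∀ u v, f (mB u v) = m (f u) (f v)) : IsAltMul mB := by
  refine ⟨fun u v w => hinj ?_, fun u v w => hinj ?_⟩
  · rw [map_neg, map_assoc_s10 f hf, map_assoc_s10 f hf, hm.1]
  · rw [map_neg, map_assoc_s10 f hf, map_assoc_s10 f hf, hm.2]

theorem isDefMap_iff_map_deformedMul {m : A →ₗ[K] A →ₗ[K] A} {mB : B →ₗ[K] B →ₗ[K] B}
    {tr : A →ₗ[K] B →ₗ[K] B} {tl : B →ₗ[K] A →ₗ[K] B}
    {pr : B →ₗ[K] A →ₗ[K] A} {pl : A →ₗ[K] B →ₗ[K] A} {r : B →ₗ[K] A} :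
    IsDefMap m mB tr tl pr pl r ↔ ∀ u v : B,
      r.prod LinearMap.id (deformedMul mB tr tl r u v)
        = matchedMul m mB tr tl pr pl (r.prod LinearMap.id u) (r.prod LinearMap.id v) := by
  refine forall₂_congr fun u v => ?_
  have hsnd : (r.prod LinearMap.id (deformedMul mB tr tl r u v)).2
      = (matchedMul m mB tr tl pr pl (r.prod LinearMap.id u) (r.prod LinearMap.id v)).2 := rfl
  rw [Prod.ext_iff, and_iff_left hsnd]
  change _ ↔ r (mB u v + tr (r u) v + tl u (r v)) = m (r u) (r v) + pr u (r v) + pl (r u) v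
  rw [sub_eq_sub_iff_add_eq_add, ← map_add, ← add_assoc, add_comm _ (m (r u) (r v)), ← add_assoc]

theorem isCompl_ker_range_of_comp_eq_id {R M N : Type*} [Ring R] [AddCommGroup M]
    [AddCommGroup N] [Module R M] [Module R N] {g : M →ₗ[R] N} {s : N →ₗ[R] M}
    (h : g ∘ₗ s = LinearMap.id) : IsCompl (LinearMap.ker g) (LinearMap.range s) := by
  have hgs : ∀ x, g (s x) = x := LinearMap.congr_fun h
  have hidem : IsIdempotentElem (s ∘ₗ g) := LinearMap.ext fun x => congrArg s (hgs (g x))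
  have hker : LinearMap.ker (s ∘ₗ g) = LinearMap.ker g :=
    LinearMap.ker_comp_of_ker_eq_bot g (LinearMap.ker_eq_bot_of_inverse h)
  have hrange : LinearMap.range (s ∘ₗ g) = LinearMap.range s :=
    LinearMap.range_comp_of_range_eq_top s (LinearMap.range_eq_top.2 fun x => ⟨s x, hgs x⟩)
  rw [← hker, ← hrange]
  exact (LinearMap.IsIdempotentElem.isCompl hidem).symm

theorem isCompl_range_inl_range_prod_id {R M N : Type*} [Ring R] [AddCommGroup M]
    [AddCommGroup N] [Module R M] [Module R N] (f : M →ₗ[R] N) :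
    IsCompl (LinearMap.range (LinearMap.inl R N M))
      (LinearMap.range (f.prod (LinearMap.id : M →ₗ[R] M))) := by
  rw [← LinearMap.ker_snd]
  exact isCompl_ker_range_of_comp_eq_id (LinearMap.snd_prod f LinearMap.id)

theorem deformation_map_gives_complement_general
    (m : A →ₗ[K] A →ₗ[K] A) (mB : B →ₗ[K] B →ₗ[K] B)
    (tr : A →ₗ[K] B →ₗ[K] B) (tl : B →ₗ[K] A →ₗ[K] B)
    (pr : B →ₗ[K] A →ₗ[K] A) (pl : A →ₗ[K] B →ₗ[K] A)
    (hmp : IsAltMul (matchedMul m mB tr tl pr pl))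
    (r : B →ₗ[K] A) (hr : IsDefMap m mB tr tl pr pl r) :
    (∀ p ∈ LinearMap.range (r.prod LinearMap.id),
      ∀ q ∈ LinearMap.range (r.prod LinearMap.id),
        matchedMul m mB tr tl pr pl p q ∈ LinearMap.range (r.prod LinearMap.id)) ∧
    IsAltMul (deformedMul mB tr tl r) ∧
    Function.Injective (r.prod (LinearMap.id : B →ₗ[K] B)) ∧
    (∀ u v : B,
      (r.prod LinearMap.id) (deformedMul mB tr tl r u v)
        = matchedMul m mB tr tl pr pl ((r.prod LinearMap.id) u) ((r.prod LinearMap.id) v)) ∧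
    IsCompl (LinearMap.range (LinearMap.inl K A B))
      (LinearMap.range (r.prod (LinearMap.id : B →ₗ[K] B))) := by
  have hinj : Function.Injective (r.prod (LinearMap.id : B →ₗ[K] B)) :=
    Function.LeftInverse.injective (g := Prod.snd) fun _ => rfl
  have hmul := isDefMap_iff_map_deformedMul.1 hr
  refine ⟨?_, hmp.of_injective_s10 hinj hmul, hinj, hmul, isCompl_range_inl_range_prod_id r⟩
  rintro _ ⟨u, rfl⟩ _ ⟨v, rfl⟩
  exact ⟨deformedMul mB tr tl r u v, hmul u v⟩

/-- Given a matched pair of alternative algebras with bicrossed product `A ⋈ B` and a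
deformation map `r : B → A`: (1) the image of `f_r(u) := (r(u), u)` is a subalgebra of
`A ⋈ B`; (2) the `r`-deformation `B_r` is an alternative algebra and `f_r` is an algebra
isomorphism from `B_r` onto its image; (3) `Im(f_r)` is an `A`-complement of `A ⋈ B`. -/
theorem deformation_map_gives_complement
    (h2 : ringChar K ≠ 2) (h3 : ringChar K ≠ 3)
    (m : A →ₗ[K] A →ₗ[K] A) (hm : IsAltMul m)
    (mB : B →ₗ[K] B →ₗ[K] B) (hmB : IsAltMul mB)
    (tr : A →ₗ[K] B →ₗ[K] B) (tl : B →ₗ[K] A →ₗ[K] B)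
    (pr : B →ₗ[K] A →ₗ[K] A) (pl : A →ₗ[K] B →ₗ[K] A)
    (hmp : IsAltMul (matchedMul m mB tr tl pr pl))
    (r : B →ₗ[K] A) (hr : IsDefMap m mB tr tl pr pl r) :
    (∀ p ∈ LinearMap.range (r.prod LinearMap.id),
      ∀ q ∈ LinearMap.range (r.prod LinearMap.id),
        matchedMul m mB tr tl pr pl p q ∈ LinearMap.range (r.prod LinearMap.id)) ∧
    IsAltMul (deformedMul mB tr tl r) ∧
    Function.Injective (r.prod (LinearMap.id : B →ₗ[K] B)) ∧
    (∀ u v : B,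
      (r.prod LinearMap.id) (deformedMul mB tr tl r u v)
        = matchedMul m mB tr tl pr pl ((r.prod LinearMap.id) u) ((r.prod LinearMap.id) v)) ∧
    IsCompl (LinearMap.range (LinearMap.inl K A B))
      (LinearMap.range (r.prod (LinearMap.id : B →ₗ[K] B))) :=
  deformation_map_gives_complement_general m mB tr tl pr pl hmp r hr

end AltExtend
end
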